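/- arXiv:1607.01649 — 2 statements merged into one kernel-verified Lean document; each statement's English description precedes it below -/
import Mathlib

section
/- Let T be a real m×n matrix, let r be a positive integer, and let α ∈ (0,1). Draw an independent family g_1, …, g_r of standard Gaussian vectors in ℝⁿ. Then ‖T‖ ≤ (1/α)·√(2/π)·max_{i=1,…,r} ‖T g_i‖ holds with probability at least 1 − α^r. -/
open MeasureTheory ProbabilityTheory Matrix BigOperators

noncomputable section

/-- Euclidean norm of a real vector. -/
def euclNorm {ι : Type*} [Fintype ι] (x : ι → ℝ) : ℝ := Real.sqrt (∑ i, x i ^ 2)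

/-- Spectral norm of a real matrix: the supremum of `‖A x‖` over unit vectors `x`. -/
def specNorm {ι κ : Type*} [Fintype ι] [Fintype κ] (A : Matrix ι κ ℝ) : ℝ :=
  sSup {r : ℝ | ∃ x : κ → ℝ, euclNorm x = 1 ∧ r = euclNorm (A.mulVec x)}

/-- The law of a family of `r` independent standard Gaussian vectors in `ℝⁿ`. -/
def stdGaussianVectors (r n : ℕ) : Measure (Fin r → Fin n → ℝ) :=
  Measure.pi fun _ => Measure.pi fun _ => gaussianReal 0 1

lemma euclNorm_eq {ι : Type*} [Fintype ι] (x : ι → ℝ) : euclNorm x = ‖WithLp.toLp 2 x‖ := by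
  simp [euclNorm, EuclideanSpace.norm_eq]

lemma dot_eq_inner {ι : Type*} [Fintype ι] (x y : ι → ℝ) :
    x ⬝ᵥ y = inner ℝ (WithLp.toLp 2 x) (WithLp.toLp 2 y) := by
  simp [PiLp.inner_apply, dotProduct, mul_comm]

lemma abs_dot_le {ι : Type*} [Fintype ι] (x y : ι → ℝ) :
    |x ⬝ᵥ y| ≤ euclNorm x * euclNorm y := by
  rw [dot_eq_inner, euclNorm_eq, euclNorm_eq]
  exact abs_real_inner_le_norm _ _

lemma euclNorm_sq {ι : Type*} [Fintype ι] (x : ι → ℝ) : x ⬝ᵥ x = euclNorm x ^ 2 := by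
  rw [dot_eq_inner, euclNorm_eq, real_inner_self_eq_norm_sq]

lemma continuous_euclNorm {ι : Type*} [Fintype ι] :
    Continuous (euclNorm : (ι → ℝ) → ℝ) := by
  unfold euclNorm
  fun_prop

lemma specNorm_attained {m n : ℕ} (T : Matrix (Fin m) (Fin n) ℝ) (h : 0 < specNorm T) :
    ∃ x : Fin n → ℝ, euclNorm x = 1 ∧ specNorm T = euclNorm (T.mulVec x) := by
  have hc : IsCompact {x : Fin n → ℝ | euclNorm x = 1} := by
    refine (isCompact_closedBall (0 : Fin n → ℝ) 1).of_isClosed_subset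
      (isClosed_eq continuous_euclNorm continuous_const) ?_
    intro x hx
    simp only [Set.mem_setOf_eq] at hx
    rw [mem_closedBall_zero_iff, pi_norm_le_iff_of_nonneg zero_le_one]
    intro i
    rw [← hx, euclNorm_eq]
    exact PiLp.norm_apply_le (WithLp.toLp 2 x) i
  have hT : Continuous (fun x : Fin n → ℝ => euclNorm (T.mulVec x)) :=
    continuous_euclNorm.comp (by fun_prop)
  have hset : {r : ℝ | ∃ x : Fin n → ℝ, euclNorm x = 1 ∧ r = euclNorm (T.mulVec x)} =
      (fun x : Fin n → ℝ => euclNorm (T.mulVec x)) '' {x | euclNorm x = 1} := by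
    ext r
    simp [eq_comm]
  have hne : ({r : ℝ | ∃ x : Fin n → ℝ, euclNorm x = 1 ∧ r = euclNorm (T.mulVec x)}).Nonempty := by
    by_contra hh
    rw [Set.not_nonempty_iff_eq_empty] at hh
    rw [specNorm, hh] at h
    simp at h
  have hcc := hc.image hT
  rw [← hset] at hcc
  exact hcc.sSup_mem hne

lemma gaussian_dot_bound {n : ℕ} (w : Fin n → ℝ) (t : ℝ) (ht : 0 ≤ t) (hw : 0 < euclNorm w) :
    (Measure.pi fun _ : Fin n => gaussianReal 0 1) {g | |w ⬝ᵥ g| < t} ≤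
      ENNReal.ofReal ((Real.sqrt (2 * Real.pi) * euclNorm w)⁻¹ * (2 * t)) := by
  set L : StrongDual ℝ (EuclideanSpace ℝ (Fin n)) := innerSL ℝ (WithLp.toLp 2 w) with hL
  have hnorm : ‖L‖ = euclNorm w := by rw [hL, innerSL_apply_norm, euclNorm_eq]
  have hlaw := IsGaussian.map_eq_gaussianReal (μ := stdGaussian (EuclideanSpace ℝ (Fin n))) L
  rw [integral_strongDual_stdGaussian, variance_dual_stdGaussian, hnorm] at hlaw
  have hset : {g : Fin n → ℝ | |w ⬝ᵥ g| < t} =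
      (WithLp.toLp 2) ⁻¹' (L ⁻¹' (Set.Ioo (-t) t)) := by
    ext g
    simp only [Set.mem_setOf_eq, Set.mem_preimage, Set.mem_Ioo, hL, innerSL_apply_apply,
      ← dot_eq_inner, abs_lt]
  have hm : MeasurableSet (L ⁻¹' (Set.Ioo (-t) t)) := L.continuous.measurable measurableSet_Ioo
  rw [hset, ← Measure.map_apply (by fun_prop) hm, map_pi_eq_stdGaussian,
    ← Measure.map_apply L.continuous.measurable measurableSet_Ioo, hlaw]
  have hv : (euclNorm w ^ 2).toNNReal ≠ 0 := by
    simpa using hw.ne'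
  rw [gaussianReal_apply _ hv]
  calc ∫⁻ x in Set.Ioo (-t) t, gaussianPDF 0 (euclNorm w ^ 2).toNNReal x
      ≤ ∫⁻ x in Set.Ioo (-t) t, ENNReal.ofReal ((Real.sqrt (2 * Real.pi) * euclNorm w)⁻¹) := by
        refine lintegral_mono fun x => ?_
        rw [gaussianPDF]
        refine ENNReal.ofReal_le_ofReal ?_
        rw [gaussianPDFReal, Real.coe_toNNReal _ (by positivity), Real.sqrt_mul (by positivity),
          Real.sqrt_sq hw.le]
        refine mul_le_of_le_one_right (by positivity) ?_
        rw [Real.exp_le_one_iff]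
        exact div_nonpos_of_nonpos_of_nonneg (by nlinarith [sq_nonneg (x - 0)]) (by positivity)
    _ = _ := by
        rw [setLIntegral_const, Real.volume_Ioo, ← ENNReal.ofReal_mul (by positivity)]
        congr 1
        ring

/-- **Randomized a posteriori norm estimation** (Lemma 4.1 of Halko–Martinsson–Tropp):
with probability at least `1 - α ^ r`, the spectral norm of `T` is bounded by
`(1/α) √(2/π) maxᵢ ‖T gᵢ‖`. -/
theorem randomized_norm_estimate (m n r : ℕ) (hr : 0 < r) (α : ℝ) (hα : α ∈ Set.Ioo (0 : ℝ) 1)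
    (T : Matrix (Fin m) (Fin n) ℝ) :
    stdGaussianVectors r n
        {g | specNorm T ≤
          (1 / α) * Real.sqrt (2 / Real.pi) * ⨆ i : Fin r, euclNorm (T.mulVec (g i))} ≥
      ENNReal.ofReal (1 - α ^ r) := by
  obtain ⟨hα0, hα1⟩ := hα
  haveI : Nonempty (Fin r) := ⟨⟨0, hr⟩⟩
  haveI : IsProbabilityMeasure (stdGaussianVectors r n) := by
    unfold stdGaussianVectors; infer_instance
  set C : ℝ := (1 / α) * Real.sqrt (2 / Real.pi) with hC
  have hCpos : 0 < C := by positivity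
  have hen : ∀ y : Fin m → ℝ, 0 ≤ euclNorm y := fun y => Real.sqrt_nonneg _
  set S := {g : Fin r → Fin n → ℝ | specNorm T ≤ C * ⨆ i : Fin r, euclNorm (T.mulVec (g i))}
    with hS
  suffices hcompl : stdGaussianVectors r n Sᶜ ≤ ENNReal.ofReal (α ^ r) by
    have h1 : (1 : ENNReal) ≤ stdGaussianVectors r n S + stdGaussianVectors r n Sᶜ := by
      rw [← measure_univ (μ := stdGaussianVectors r n), ← Set.union_compl_self S]
      exact measure_union_le _ _
    rw [ge_iff_le, ENNReal.ofReal_sub _ (by positivity), ENNReal.ofReal_one, tsub_le_iff_right]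
    exact h1.trans (by gcongr)
  rcases le_or_gt (specNorm T) 0 with h0 | h0
  · have : Sᶜ = ∅ := by
      rw [Set.compl_empty_iff, Set.eq_univ_iff_forall]
      intro g
      exact h0.trans (mul_nonneg hCpos.le (Real.iSup_nonneg fun i => hen _))
    rw [this]
    simp
  obtain ⟨x, hx1, hxs⟩ := specNorm_attained T h0
  set s := specNorm T with hs
  set w : Fin n → ℝ := (T.mulVec x) ᵥ* T with hw
  have hdot : ∀ g, w ⬝ᵥ g = T.mulVec x ⬝ᵥ T.mulVec g := fun g => by
    rw [hw, ← Matrix.dotProduct_mulVec]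
  have hws : s ^ 2 ≤ euclNorm w := by
    have h1 := abs_dot_le w x
    rw [hdot, euclNorm_sq, ← hxs, hx1, mul_one] at h1
    exact (le_abs_self _).trans h1
  have hwpos : 0 < euclNorm w := lt_of_lt_of_le (by positivity) hws
  have hsub : Sᶜ ⊆ Set.univ.pi fun _ : Fin r => {g : Fin n → ℝ | |w ⬝ᵥ g| < s * (s / C)} := by
    intro g hg i _
    simp only [hS, Set.mem_compl_iff, Set.mem_setOf_eq, not_le] at hg
    have h1 : euclNorm (T.mulVec (g i)) < s / C := by
      rw [lt_div_iff₀ hCpos, mul_comm]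
      refine lt_of_le_of_lt ?_ hg
      gcongr
      exact le_ciSup (f := fun i => euclNorm (T.mulVec (g i))) (Set.finite_range _).bddAbove i
    have h2 := abs_dot_le (T.mulVec x) (T.mulVec (g i))
    rw [← hxs, ← hdot] at h2
    exact h2.trans_lt (by gcongr)
  refine (measure_mono hsub).trans ?_
  rw [stdGaussianVectors, Measure.pi_pi, Finset.prod_const, Finset.card_univ, Fintype.card_fin,
    ENNReal.ofReal_pow hα0.le]
  gcongr
  refine (gaussian_dot_bound w _ (by positivity) hwpos).trans (ENNReal.ofReal_le_ofReal ?_)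
  have hpi := Real.pi_pos
  have hsq : Real.sqrt (2 * Real.pi) * Real.sqrt (2 / Real.pi) = 2 := by
    rw [← Real.sqrt_mul (by positivity)]
    rw [show 2 * Real.pi * (2 / Real.pi) = 2 ^ 2 by field_simp]
    exact Real.sqrt_sq (by norm_num)
  have hCC : Real.sqrt (2 * Real.pi) * C = 2 / α := by
    rw [hC]
    calc _ = (1 / α) * (Real.sqrt (2 * Real.pi) * Real.sqrt (2 / Real.pi)) := by ring
      _ = 2 / α := by rw [hsq]; ring
  calc (Real.sqrt (2 * Real.pi) * euclNorm w)⁻¹ * (2 * (s * (s / C)))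
      = 2 * s ^ 2 / ((Real.sqrt (2 * Real.pi) * C) * euclNorm w) := by
        field_simp
    _ = α * (s ^ 2 / euclNorm w) := by rw [hCC]; field_simp
    _ ≤ α * 1 := by
        gcongr
        exact (div_le_one hwpos).2 hws
    _ = α := mul_one α

end
end

section
/- Let A be an m×n matrix of exact rank k, with k < min(m,n). Then there exists an index vector J_s ⊆ {1,…,n} of length k and a k×n matrix Z such that A = A(:, J_s) · Z, where every entry of Z is bounded in modulus by 1 and the k×k submatrix Z(:, J_s) is the identity. -/
open Matrix BigOperators

/-- Basis extraction maximizing the determinant. -/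
lemma exists_max_volume_basis {V : Type*} [AddCommGroup V] [Module ℝ V] {n k : ℕ}
    (hn : 0 < n) (b : Module.Basis (Fin k) ℝ V) (c : Fin n → V)
    (hc : Submodule.span ℝ (Set.range c) = ⊤) :
    ∃ (J : Fin k → Fin n) (e : Module.Basis (Fin k) ℝ V), (∀ i, e i = c (J i)) ∧
      ∀ i j, |e.repr (c j) i| ≤ 1 := by
  have : Nonempty (Fin n) := ⟨⟨0, hn⟩⟩
  obtain ⟨J, hJ⟩ := Finite.exists_max (fun J : Fin k → Fin n => |b.det (c ∘ J)|)
  have hpos : 0 < |b.det (c ∘ J)| := by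
    obtain ⟨κ, a, ha, hsp, hli⟩ := exists_linearIndependent' ℝ c
    let e := Module.Basis.mk hli (by rw [hsp, hc])
    let σ := b.indexEquiv e
    refine lt_of_lt_of_le ?_ (hJ (a ∘ σ))
    have h := b.isUnit_det (e.reindex σ.symm)
    have h2 : (⇑(e.reindex σ.symm)) = c ∘ a ∘ σ := by
      ext i; simp [e]
    rw [h2] at h
    exact abs_pos.mpr h.ne_zero
  have hb : IsUnit (b.det (c ∘ J)) := (abs_pos.mp hpos).isUnit
  obtain ⟨hli, hsp⟩ := (Module.Basis.is_basis_iff_det b).mpr hb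
  refine ⟨J, Module.Basis.mk hli hsp.ge, fun i => by simp, fun i j => ?_⟩
  have h := LinearMap.congr_fun (b.det_smul_mk_coord_eq_det_update hli hsp.ge i) (c j)
  have h3 : Function.update (c ∘ J) i (c j) = c ∘ Function.update J i j := by
    rw [Function.comp_update]
  have h4 : b.det (c ∘ J) * (Module.Basis.mk hli hsp.ge).repr (c j) i
      = b.det (c ∘ Function.update J i j) := by
    rw [← h3]; simpa using h
  have h5 := hJ (Function.update J i j)
  rw [← h4, abs_mul] at h5
  exact le_of_mul_le_mul_left (by simpa using h5) hpos

/-- **Existence of a well-conditioned column interpolative decomposition**: any rank-`k`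
matrix `A` (with `k < min(m,n)`) can be written as `A = A(:, J_s) Z` where every entry of
`Z` is bounded in modulus by one and `Z(:, J_s)` is the `k × k` identity. -/
theorem exists_well_conditioned_column_id (m n k : ℕ) (hk : k < min m n)
    (A : Matrix (Fin m) (Fin n) ℝ) (hrank : A.rank = k) :
    ∃ (Js : Fin k → Fin n), Function.Injective Js ∧
      ∃ Z : Matrix (Fin k) (Fin n) ℝ,
        A = A.submatrix id Js * Z ∧
        (∀ i j, |Z i j| ≤ 1) ∧
        Z.submatrix id Js = 1 := by
  rw [Matrix.rank_eq_finrank_span_cols] at hrank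
  let b := Module.finBasisOfFinrankEq ℝ _ hrank
  let c : Fin n → Submodule.span ℝ (Set.range A.col) :=
    fun j => ⟨A.col j, Submodule.subset_span ⟨j, rfl⟩⟩
  have hspan : Submodule.span ℝ (Set.range c) = ⊤ := by
    have hr : Set.range c = ((↑) : Submodule.span ℝ (Set.range A.col) → Fin m → ℝ) ⁻¹'
        (Set.range A.col) := by
      ext v
      constructor
      · rintro ⟨j, rfl⟩
        exact ⟨j, rfl⟩
      · rintro ⟨j, hj⟩
        exact ⟨j, Subtype.ext hj⟩
    rw [hr]
    exact Submodule.span_span_coe_preimage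
  obtain ⟨J, e, he, hle⟩ := exists_max_volume_basis (by omega) b c
    hspan
  refine ⟨J, fun i i' h => e.injective (by rw [he, he, h]),
    Matrix.of fun i j => e.repr (c j) i, ?_, hle, ?_⟩
  · ext r j
    have h := congrArg (fun v : Submodule.span ℝ (Set.range A.col) => (v : Fin m → ℝ) r)
      (e.sum_repr (c j))
    simp only [he] at h
    simp only [Matrix.mul_apply, Matrix.submatrix_apply, Matrix.of_apply, id]
    simp [c, Finset.sum_apply] at h
    rw [← h]
    exact Finset.sum_congr rfl fun i _ => mul_comm _ _
  · ext i i'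
    simp [← he, Matrix.one_apply, Finsupp.single_apply, eq_comm]
end
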